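/- Let (Ω,Σ,μ) be a probability space, X a Banach space, W ⊆ X a weakly compact set, and L(W) = {f ∈ L¹(μ,X) : f(ω) ∈ W for μ-a.e. ω}. Then L(W) is a δS-set; in particular, L(W) is relatively weakly compact in L¹(μ,X). -/

import Mathlib

open MeasureTheory Filter Set ENNReal Pointwise

noncomputable section

def IsWeaklyCompact {X : Type*} [NormedAddCommGroup X] [NormedSpace ℝ X] (W : Set X) : Prop :=
  IsCompact (toWeakSpace ℝ X '' W)

def IsRelWeaklyCompact {X : Type*} [NormedAddCommGroup X] [NormedSpace ℝ X] (W : Set X) : Prop :=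
  IsCompact (closure (toWeakSpace ℝ X '' W))

variable {Ω : Type*} [MeasurableSpace Ω] {X : Type*} [NormedAddCommGroup X] [NormedSpace ℝ X]

/-- A set of functions in `L¹(μ,X)` is uniformly integrable if it is bounded and the integrals
of the norms over small sets are uniformly small. -/
def UnifIntegrableSet (μ : Measure Ω) (K : Set (Lp X 1 μ)) : Prop :=
  (∃ C : ℝ, ∀ f ∈ K, ‖f‖ ≤ C) ∧
  ∀ ε : ℝ, 0 < ε → ∃ δ : ℝ, 0 < δ ∧ ∀ f ∈ K, ∀ A : Set Ω, μ A ≤ ENNReal.ofReal δ →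
    ∫ ω in A, ‖(f : Ω → X) ω‖ ∂μ ≤ ε

/-- `K ⊆ L¹(μ,X)` is a δS-set if it is uniformly integrable and for every `δ > 0` there is a
weakly compact `W ⊆ X` with `μ (f ⁻¹' W) ≥ 1 - δ` for all `f ∈ K`. -/
def IsDeltaSSet (μ : Measure Ω) (K : Set (Lp X 1 μ)) : Prop :=
  UnifIntegrableSet μ K ∧
  ∀ δ : ℝ, 0 < δ → ∃ W : Set X, IsWeaklyCompact W ∧
    ∀ f ∈ K, 1 - ENNReal.ofReal δ ≤ μ ((f : Ω → X) ⁻¹' W)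

/-- A Banach space `X` has property (δSμ) if every relatively weakly compact subset of
`L¹(μ,X)` is a δS-set. -/
def DeltaSProp (μ : Measure Ω) (X : Type*) [NormedAddCommGroup X] [NormedSpace ℝ X] : Prop :=
  ∀ K : Set (Lp X 1 μ), IsRelWeaklyCompact K → IsDeltaSSet μ K

/-!
For the weak compactness of `L(W)`, weak compactness is tested on sequences: outside the canonical
image of `X` in its bidual, a weak-* cluster point yields an array of functionals and vectors that
violates Grothendieck's double limit condition. A sequence in `L¹(μ, X)` takes its values in a
separable subspace, so `X` may be assumed separable, and then `W` with its weak topology is a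
compact metrizable space `K`.

A function with values in `W` is a measurable map `k : Ω → K`, that is, the family of Dirac measures
`δ_{k(ω)}`. These families lie in the set of Young measures on `K`, the positive part of the unit
ball of `L¹(μ, C(K))*`, which is weak-* compact by Banach–Alaoglu. Taking barycenters pointwise is
continuous from there to the weak topology of `L¹(μ, X)`: a functional on `L¹(μ, X)` is the integral
against a bounded family `g` of functionals on `X`, and `ω ↦ g(ω)|_K` is an element of
`L¹(μ, C(K))`. So `L(W)` is contained in a weakly compact set.
-/

theorem continuous_apply_toWeakSpace_symm (φ : StrongDual ℝ X) :
    Continuous fun x : WeakSpace ℝ X => φ ((toWeakSpace ℝ X).symm x) :=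
  WeakBilin.eval_continuous (topDualPairing ℝ X).flip φ

section WeakCompactness

variable {W K L : Set X}

theorem IsWeaklyCompact.isBounded (hW : IsWeaklyCompact W) : Bornology.IsBounded W := by
  obtain ⟨C, hC⟩ := banach_steinhaus (g := fun x : W => NormedSpace.inclusionInDoubleDual ℝ X x)
    (fun φ => by
      obtain ⟨C, hC⟩ := (hW.image (continuous_apply_toWeakSpace_symm φ)).isBounded.exists_norm_le
      exact ⟨C, fun x => hC _ ⟨_, mem_image_of_mem _ x.2, by simp⟩⟩)
  refine isBounded_iff_forall_norm_le.2 ⟨C, fun x hx => ?_⟩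
  calc ‖x‖ = ‖NormedSpace.inclusionInDoubleDual ℝ X x‖ :=
        ((NormedSpace.inclusionInDoubleDualLi ℝ).norm_map x).symm
    _ ≤ C := hC ⟨x, hx⟩

theorem IsRelWeaklyCompact.isBounded (hK : IsRelWeaklyCompact K) : Bornology.IsBounded K := by
  have hcl : IsWeaklyCompact ((toWeakSpace ℝ X).symm '' closure (toWeakSpace ℝ X '' K)) := by
    simpa only [IsWeaklyCompact, IsRelWeaklyCompact, image_image, LinearEquiv.apply_symm_apply,
      image_id'] using hK
  exact hcl.isBounded.subset fun x hx =>
    ⟨toWeakSpace ℝ X x, subset_closure (mem_image_of_mem _ hx), by simp⟩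

theorem IsRelWeaklyCompact.mono (hL : IsRelWeaklyCompact L) (h : K ⊆ L) : IsRelWeaklyCompact K :=
  hL.of_isClosed_subset isClosed_closure (closure_mono (image_mono h))

theorem IsRelWeaklyCompact.image {Z : Type*} [NormedAddCommGroup Z] [NormedSpace ℝ Z]
    (hK : IsRelWeaklyCompact K) (T : X →L[ℝ] Z) : IsRelWeaklyCompact (T '' K) := by
  refine (IsCompact.image hK (WeakSpace.map T).continuous).closure_of_subset ?_
  rintro _ ⟨_, ⟨x, hx, rfl⟩, rfl⟩
  exact ⟨toWeakSpace ℝ X x, subset_closure (mem_image_of_mem _ hx), rfl⟩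

theorem IsWeaklyCompact.preimage_subtype (hK : IsWeaklyCompact K) {Y : Submodule ℝ X}
    (hY : IsClosed (Y : Set X)) : IsWeaklyCompact ((↑) ⁻¹' K : Set Y) := by
  have hYc : IsClosed (toWeakSpace ℝ X '' (Y : Set X)) := by
    rw [← hY.closure_eq, Y.convex.toWeakSpace_closure ℝ]
    exact isClosed_closure
  have hcompact : IsCompact (toWeakSpace ℝ X '' K ∩ toWeakSpace ℝ X '' (Y : Set X)) :=
    IsCompact.inter_right hK hYc
  have := isCompact_iff_compactSpace.1 hcompact
  have hlift : ∀ s : (toWeakSpace ℝ X '' K ∩ toWeakSpace ℝ X '' (Y : Set X) : Set (WeakSpace ℝ X)),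
      ∃ y : Y, (y : X) ∈ K ∧ (y : X) = (toWeakSpace ℝ X).symm s := by
    rintro ⟨_, ⟨x, hxK, rfl⟩, x', hxY, hxx'⟩
    obtain rfl := (toWeakSpace ℝ X).injective hxx'
    exact ⟨⟨x', hxY⟩, hxK, rfl⟩
  choose y hyK hy using hlift
  have hcont : Continuous fun s => toWeakSpace ℝ Y (y s) :=
    WeakBilin.continuous_of_continuous_eval _ fun u => by
      obtain ⟨g, hg, -⟩ := exists_extension_norm_eq Y u
      refine ((continuous_apply_toWeakSpace_symm g).comp continuous_subtype_val).congr fun s => ?_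
      exact (congrArg g (hy s)).symm.trans (hg (y s))
  suffices h : toWeakSpace ℝ Y '' ((↑) ⁻¹' K) = range fun s => toWeakSpace ℝ Y (y s) by
    rw [IsWeaklyCompact, h]
    exact isCompact_range hcont
  refine Subset.antisymm ?_ (range_subset_iff.2 fun s => mem_image_of_mem _ (hyK s))
  rintro _ ⟨x, hxK, rfl⟩
  refine ⟨⟨toWeakSpace ℝ X x, mem_image_of_mem _ hxK, mem_image_of_mem _ x.2⟩, congrArg _ ?_⟩
  exact Subtype.ext ((hy _).trans ((toWeakSpace ℝ X).symm_apply_apply _))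

end WeakCompactness

section UniformIntegrability

variable {E : Type*} [NormedAddCommGroup E] {μ : Measure Ω}

theorem setIntegral_norm_le_of_ae_norm_le [IsFiniteMeasure μ] {f : Lp E 1 μ} {R : ℝ}
    (hf : ∀ᵐ ω ∂μ, ‖f ω‖ ≤ R) (A : Set Ω) : ∫ ω in A, ‖f ω‖ ∂μ ≤ μ.real A * R :=
  calc ∫ ω in A, ‖f ω‖ ∂μ ≤ ∫ _ in A, R ∂μ :=
        integral_mono_ae (L1.integrable_coeFn f).norm.integrableOn (integrable_const _)
          (ae_restrict_of_ae hf)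
    _ = μ.real A * R := by simp

theorem unifIntegrableSet_setOf_ae_norm_le [IsFiniteMeasure μ] {R : ℝ} (hR : 0 < R) :
    UnifIntegrableSet μ {f : Lp E 1 μ | ∀ᵐ ω ∂μ, ‖f ω‖ ≤ R} := by
  refine ⟨⟨μ.real univ * R, fun f hf => ?_⟩,
    fun ε hε => ⟨ε / R, by positivity, fun f hf A hA => ?_⟩⟩
  · simpa [L1.norm_eq_integral_norm] using setIntegral_norm_le_of_ae_norm_le hf univ
  · calc ∫ ω in A, ‖f ω‖ ∂μ ≤ μ.real A * R := setIntegral_norm_le_of_ae_norm_le hf A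
      _ ≤ ε / R * R := by
          gcongr
          exact ENNReal.toReal_le_of_le_ofReal (by positivity) hA
      _ = ε := by field_simp

theorem UnifIntegrableSet.mono {K L : Set (Lp E 1 μ)} (hL : UnifIntegrableSet μ L)
    (hKL : K ⊆ L) : UnifIntegrableSet μ K := by
  obtain ⟨⟨C, hC⟩, hL⟩ := hL
  refine ⟨⟨C, fun f hf => hC f (hKL hf)⟩, fun ε hε => ?_⟩
  obtain ⟨δ, hδ, h⟩ := hL ε hε
  exact ⟨δ, hδ, fun f hf => h f (hKL hf)⟩

theorem IsWeaklyCompact.isDeltaSSet_setOf_ae_mem [IsProbabilityMeasure μ] {W : Set X}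
    (hW : IsWeaklyCompact W) : IsDeltaSSet μ {f : Lp X 1 μ | ∀ᵐ ω ∂μ, f ω ∈ W} := by
  obtain ⟨R, hR0, hR⟩ := hW.isBounded.exists_pos_norm_le
  refine ⟨(unifIntegrableSet_setOf_ae_norm_le hR0).mono fun f (hf : ∀ᵐ ω ∂μ, f ω ∈ W) =>
    hf.mono fun ω => hR _, fun δ _ => ⟨W, hW, fun f (hf : ∀ᵐ ω ∂μ, f ω ∈ W) => ?_⟩⟩
  have hfW : (f ⁻¹' W : Set Ω) =ᵐ[μ] univ := eventuallyEq_univ.2 hf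
  exact tsub_le_self.trans ((measure_congr hfW).trans measure_univ).ge

end UniformIntegrability

section TriangularSystems

theorem exists_norm_le_one_and_lt_apply_of_lt_norm_sub {E ι : Type*} [NormedAddCommGroup E]
    [NormedSpace ℝ E] [Finite ι] (L : ι → StrongDual ℝ E) (ξ : StrongDual ℝ E) {r : ℝ}
    (hξ : ∀ x ∈ Submodule.span ℝ (range L), r < ‖ξ - x‖) :
    ∃ φ : E, ‖φ‖ ≤ 1 ∧ (∀ i, L i φ = 0) ∧ r < ξ φ := by
  let N : Submodule ℝ E := ⨅ i, LinearMap.ker (L i).toLinearMap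
  obtain ⟨g, hgN, hg⟩ := exists_extension_norm_eq N (ξ.comp N.subtypeL)
  have hmem : (ξ - g).toLinearMap ∈ Submodule.span ℝ (range fun i => (L i).toLinearMap) :=
    mem_span_of_iInf_ker_le_ker fun φ hφ => by simp [show g φ = ξ φ from hgN ⟨φ, hφ⟩]
  have hspan : Submodule.span ℝ (range fun i => (L i).toLinearMap) =
      (Submodule.span ℝ (range L)).map (ContinuousLinearMap.coeLM ℝ) := by
    rw [Submodule.map_span, ← range_comp]
    rfl
  rw [hspan] at hmem
  obtain ⟨x, hx, hxg⟩ := hmem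
  have hgx : g = ξ - x := eq_sub_of_add_eq' <| eq_sub_iff_add_eq.1 <|
    ContinuousLinearMap.coe_injective hxg
  have hnorm : r < ‖ξ.comp N.subtypeL‖ := by
    rw [← hg, hgx]
    exact hξ x hx
  obtain ⟨φ, hφ1, hφ⟩ := ContinuousLinearMap.exists_lt_apply_of_lt_opNorm _ hnorm
  have hker : ∀ i, L i φ = 0 := fun i => (Submodule.mem_iInf _).1 φ.2 i
  rcases lt_abs.1 hφ with h | h
  · exact ⟨φ, hφ1.le, hker, h⟩
  · exact ⟨-φ, by simpa using hφ1.le, fun i => by simp [hker i], by simpa using h⟩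

theorem isBounded_of_forall_seq {E : Type*} [SeminormedAddCommGroup E] {K : Set E}
    (hK : ∀ z : ℕ → E, (∀ n, z n ∈ K) → Bornology.IsBounded (range z)) :
    Bornology.IsBounded K := by
  by_contra hb
  have hlarge : ∀ n : ℕ, ∃ z ∈ K, n < ‖z‖ := fun n => by
    by_contra! h
    exact hb (isBounded_iff_forall_norm_le.2 ⟨n, h⟩)
  choose z hzK hz using hlarge
  obtain ⟨C, hC⟩ := isBounded_iff_forall_norm_le.1 (hK z hzK)
  obtain ⟨n, hn⟩ := exists_nat_gt C
  exact (hn.trans (hz n)).not_ge (hC _ (mem_range_self n))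

variable {Z : Type*} [NormedAddCommGroup Z] [NormedSpace ℝ Z]

/-- Triangular systems: functionals in the unit ball and vectors that violate Grothendieck's double
limit condition, `φ m (z n)` being `0` below the diagonal and larger than `c` on and above it. -/
structure IsTriangularSystem (c : ℝ) (φ : ℕ → StrongDual ℝ Z) (z : ℕ → Z) : Prop where
  norm_le_one : ∀ m, ‖φ m‖ ≤ 1
  lt_apply : ∀ m n, m ≤ n → c < φ m (z n)
  apply_eq_zero : ∀ m n, n < m → φ m (z n) = 0

theorem IsTriangularSystem.not_isRelWeaklyCompact_range {c : ℝ} {φ : ℕ → StrongDual ℝ Z}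
    {z : ℕ → Z} (h : IsTriangularSystem c φ z) (hc : 0 < c) : ¬ IsRelWeaklyCompact (range z) := by
  intro hcomp
  obtain ⟨y, -, hy⟩ := hcomp.exists_mapClusterPt (f := (atTop : Filter ℕ))
    (u := fun n => toWeakSpace ℝ Z (z n)) (tendsto_principal.2 <| Eventually.of_forall fun n =>
      subset_closure (mem_image_of_mem _ (mem_range_self n)))
  let x : Z := (toWeakSpace ℝ Z).symm y
  obtain ⟨U, hU, hlim⟩ := mapClusterPt_iff_ultrafilter.1 hy
  have hφx : ∀ m, c ≤ φ m x := fun m => by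
    refine ge_of_tendsto (((continuous_apply_toWeakSpace_symm (φ m)).tendsto y).comp hlim) ?_
    exact hU ((eventually_ge_atTop m).mono fun n hn => by simpa using (h.lt_apply m n hn).le)
  have hxcl : x ∈ closure (convexHull ℝ (range z)) := by
    have hycl : y ∈ toWeakSpace ℝ Z '' closure (convexHull ℝ (range z)) := by
      rw [(convex_convexHull ℝ _).toWeakSpace_closure ℝ]
      exact mem_closure_of_tendsto hlim (Eventually.of_forall fun n =>
        mem_image_of_mem _ (subset_convexHull ℝ _ (mem_range_self n)))
    rwa [LinearEquiv.image_eq_preimage_symm] at hycl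
  obtain ⟨w, hw, hxw⟩ := Metric.mem_closure_iff.1 hxcl c hc
  have hφw : ∀ᶠ m in atTop, φ m w = 0 := by
    have hconv : Convex ℝ {w : Z | ∀ᶠ m in atTop, φ m w = 0} := fun w₁ h₁ w₂ h₂ a b _ _ _ => by
      filter_upwards [h₁, h₂] with m h₁ h₂
      simp [h₁, h₂]
    refine convexHull_min (range_subset_iff.2 fun n => ?_) hconv hw
    exact (eventually_gt_atTop n).mono fun m hm => h.apply_eq_zero m n hm
  obtain ⟨m, hm⟩ := hφw.exists
  have : c < c :=
    calc c ≤ φ m x := hφx m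
      _ = φ m (x - w) := by rw [map_sub, hm, sub_zero]
      _ ≤ 1 * ‖x - w‖ := (le_abs_self _).trans ((φ m).le_of_opNorm_le (h.norm_le_one m) _)
      _ < c := by rwa [one_mul, ← dist_eq_norm]
  exact this.false

theorem exists_mem_forall_lt_apply_of_mem_closure {K : Set Z}
    {ξ : WeakDual ℝ (StrongDual ℝ Z)} {r : ℝ}
    (hξ : ξ ∈ closure (NormedSpace.inclusionInDoubleDualWeak ℝ Z '' (toWeakSpace ℝ Z '' K)))
    (s : Finset (StrongDual ℝ Z)) (hs : ∀ ψ ∈ s, r < ξ ψ) : ∃ z ∈ K, ∀ ψ ∈ s, r < ψ z := by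
  have hU : IsOpen (⋂ ψ ∈ s, {η : WeakDual ℝ (StrongDual ℝ Z) | r < η ψ}) :=
    isOpen_biInter_finset fun ψ _ => isOpen_lt continuous_const (WeakDual.eval_continuous ψ)
  obtain ⟨_, hη, _, ⟨z, hz, rfl⟩, rfl⟩ := mem_closure_iff.1 hξ _ hU (mem_iInter₂.2 hs)
  exact ⟨z, hz, mem_iInter₂.1 hη⟩

theorem exists_isTriangularSystem_of_lt_norm_sub {K : Set Z}
    {ξ : WeakDual ℝ (StrongDual ℝ Z)} {r : ℝ}
    (hξ : ξ ∈ closure (NormedSpace.inclusionInDoubleDualWeak ℝ Z '' (toWeakSpace ℝ Z '' K)))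
    (hr : ∀ z, r < ‖WeakDual.toStrongDual ξ - NormedSpace.inclusionInDoubleDual ℝ Z z‖) :
    ∃ (φ : ℕ → StrongDual ℝ Z) (z : ℕ → Z), (∀ n, z n ∈ K) ∧ IsTriangularSystem r φ z := by
  classical
  obtain ⟨f, hf, hlt⟩ := exists_seq_of_forall_finset_exists
    (fun p : StrongDual ℝ Z × Z => ‖p.1‖ ≤ 1 ∧ p.2 ∈ K ∧ r < ξ p.1 ∧ r < p.1 p.2)
    (fun p q => q.1 p.2 = 0 ∧ r < p.1 q.2) fun s hs => by
      obtain ⟨φ, hφ1, hφ0, hφ⟩ := exists_norm_le_one_and_lt_apply_of_lt_norm_sub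
        (fun p : s => NormedSpace.inclusionInDoubleDual ℝ Z p.1.2) (WeakDual.toStrongDual ξ)
        (r := r) fun x hx => by
          obtain ⟨z, rfl⟩ : x ∈ LinearMap.range
              (NormedSpace.inclusionInDoubleDual ℝ Z).toLinearMap :=
            Submodule.span_le.2 (range_subset_iff.2 fun p : s => mem_range_self p.1.2) hx
          exact hr z
      obtain ⟨z, hz, hlt⟩ := exists_mem_forall_lt_apply_of_mem_closure hξ
        (insert φ (s.image Prod.fst)) (r := r) <| by
          simpa [Finset.forall_mem_insert, Finset.forall_mem_image] using
            ⟨hφ, fun ψ z hp => (hs _ hp).2.2.1⟩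
      rw [Finset.forall_mem_insert, Finset.forall_mem_image] at hlt
      exact ⟨(φ, z), ⟨hφ1, hz, hφ, hlt.1⟩, fun p hp => ⟨hφ0 ⟨p, hp⟩, hlt.2 hp⟩⟩
  refine ⟨fun n => (f n).1, fun n => (f n).2, fun n => (hf n).2.1, fun n => (hf n).1,
    fun m n hmn => ?_, fun m n hnm => (hlt n m hnm).1⟩
  rcases hmn.eq_or_lt with rfl | hmn
  · exact (hf m).2.2.2
  · exact (hlt m n hmn).2

theorem exists_isTriangularSystem_of_not_isRelWeaklyCompact [CompleteSpace Z] {K : Set Z}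
    (hb : Bornology.IsBounded K) (hK : ¬ IsRelWeaklyCompact K) :
    ∃ c : ℝ, 0 < c ∧ ∃ (φ : ℕ → StrongDual ℝ Z) (z : ℕ → Z),
      (∀ n, z n ∈ K) ∧ IsTriangularSystem c φ z := by
  let J := NormedSpace.inclusionInDoubleDual ℝ Z
  let Jw := NormedSpace.inclusionInDoubleDualWeak ℝ Z
  have hnot : ¬ closure (Jw '' (toWeakSpace ℝ Z '' K)) ⊆ range Jw := fun h =>
    hK (NormedSpace.isCompact_closure_of_isBounded ℝ Z _
      (by rwa [preimage_image_eq _ (toWeakSpace ℝ Z).injective]) h)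
  obtain ⟨ξ, hξcl, hξr⟩ := not_subset.1 hnot
  have hJ : Isometry J := (NormedSpace.inclusionInDoubleDualLi ℝ (E := Z)).isometry
  have hclosed : IsClosed (range J) := hJ.isClosedEmbedding.isClosed_range
  have hξJ : WeakDual.toStrongDual ξ ∉ range J := fun ⟨z, hz⟩ =>
    hξr ⟨toWeakSpace ℝ Z z, WeakDual.toStrongDual.injective hz⟩
  obtain ⟨d, hd, hball⟩ := Metric.isOpen_iff.1 hclosed.isOpen_compl (WeakDual.toStrongDual ξ) hξJ
  refine ⟨d / 2, half_pos hd, exists_isTriangularSystem_of_lt_norm_sub hξcl fun z => ?_⟩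
  by_contra! h
  refine hball ?_ (mem_range_self z)
  rw [Metric.mem_ball, dist_comm, dist_eq_norm (WeakDual.toStrongDual ξ)]
  exact h.trans_lt (half_lt_self hd)

theorem isRelWeaklyCompact_of_forall_seq [CompleteSpace Z] {K : Set Z}
    (hK : ∀ z : ℕ → Z, (∀ n, z n ∈ K) → IsRelWeaklyCompact (range z)) : IsRelWeaklyCompact K := by
  by_contra hcon
  obtain ⟨c, hc, φ, z, hzK, hz⟩ := exists_isTriangularSystem_of_not_isRelWeaklyCompact
    (isBounded_of_forall_seq fun z hz => (hK z hz).isBounded) hcon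
  exact hz.not_isRelWeaklyCompact_range hc (hK z hzK)

end TriangularSystems

section Representation

variable {Y : Type*} [NormedAddCommGroup Y] [NormedSpace ℝ Y] {μ : Measure Ω}

/-- Bounded weak-* measurable families of functionals on `Y`, the concrete form of the functionals
on `L¹(μ, Y)`. The bound is required everywhere and not only almost everywhere. -/
structure IsBoundedWeakStarMeasurable (g : Ω → StrongDual ℝ Y) (C : ℝ) : Prop where
  measurable_apply_const : ∀ y, Measurable fun ω => g ω y
  norm_le : ∀ ω, ‖g ω‖ ≤ C

namespace IsBoundedWeakStarMeasurable

variable {g : Ω → StrongDual ℝ Y} {C : ℝ}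

theorem measurable_apply [SecondCountableTopology Y] [MeasurableSpace Y] [BorelSpace Y]
    (hg : IsBoundedWeakStarMeasurable g C) {f : Ω → Y} (hf : Measurable f) :
    Measurable fun ω => g ω (f ω) :=
  (stronglyMeasurable_uncurry_of_continuous_of_stronglyMeasurable (u := fun y ω => g ω y)
    (fun ω => (g ω).continuous) fun y => (hg.measurable_apply_const y).stronglyMeasurable)
    |>.measurable.comp (hf.prodMk measurable_id)

theorem norm_apply_le (hg : IsBoundedWeakStarMeasurable g C) (f : Ω → Y) (ω : Ω) :
    ‖g ω (f ω)‖ ≤ C * ‖f ω‖ :=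
  (g ω).le_of_opNorm_le (hg.norm_le ω) _

theorem integrable_apply [SecondCountableTopology Y] (hg : IsBoundedWeakStarMeasurable g C)
    (f : Lp Y 1 μ) : Integrable (fun ω => g ω (f ω)) μ := by
  borelize Y
  exact ((L1.integrable_coeFn f).norm.const_mul C).mono'
    (hg.measurable_apply (Lp.stronglyMeasurable f).measurable).aestronglyMeasurable
    (ae_of_all _ (hg.norm_apply_le f))

theorem indicator (hg : IsBoundedWeakStarMeasurable g C) {G : Set Ω} (hG : MeasurableSet G) :
    IsBoundedWeakStarMeasurable (G.indicator g) C where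
  measurable_apply_const y := by
    have : (fun ω => G.indicator g ω y) = G.indicator fun ω => g ω y :=
      (indicator_comp_of_zero (g := fun u : StrongDual ℝ Y => u y) rfl).symm
    exact this ▸ (hg.measurable_apply_const y).indicator hG
  norm_le ω := (norm_indicator_le_norm_self g ω).trans (hg.norm_le ω)

variable (μ) in
/-- Integration against `g`, as a functional on `L¹(μ, Y)`. -/
def integralCLM [SecondCountableTopology Y] (hg : IsBoundedWeakStarMeasurable g C) :
    StrongDual ℝ (Lp Y 1 μ) :=
  LinearMap.mkContinuous
    { toFun := fun f => ∫ ω, g ω (f ω) ∂μ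
      map_add' := fun f₁ f₂ => by
        rw [← integral_add (hg.integrable_apply f₁) (hg.integrable_apply f₂)]
        refine integral_congr_ae ?_
        filter_upwards [Lp.coeFn_add f₁ f₂] with ω hω
        rw [hω, Pi.add_apply, map_add]
      map_smul' := fun c f => by
        rw [RingHom.id_apply, smul_eq_mul, ← integral_const_mul]
        refine integral_congr_ae ?_
        filter_upwards [Lp.coeFn_smul c f] with ω hω
        rw [hω, Pi.smul_apply, map_smul, smul_eq_mul] } C fun f => by
    rw [L1.norm_eq_integral_norm, ← integral_const_mul]
    exact norm_integral_le_of_norm_le ((L1.integrable_coeFn f).norm.const_mul C)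
      (ae_of_all _ (hg.norm_apply_le f))

theorem integralCLM_apply [SecondCountableTopology Y] (hg : IsBoundedWeakStarMeasurable g C)
    (f : Lp Y 1 μ) : hg.integralCLM μ f = ∫ ω, g ω (f ω) ∂μ := rfl

theorem norm_integralCLM_le [SecondCountableTopology Y] (hg : IsBoundedWeakStarMeasurable g C)
    (hC : 0 ≤ C) : ‖hg.integralCLM μ‖ ≤ C :=
  LinearMap.mkContinuous_norm_le _ hC _

end IsBoundedWeakStarMeasurable

section IndicatorConst

variable [IsFiniteMeasure μ] {A : Set Ω}

variable (Y μ) in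
/-- The operator `y ↦ 1_A y` from `Y` to `L¹(μ, Y)`. -/
def indicatorConstL1 (hA : MeasurableSet A) : Y →L[ℝ] Lp Y 1 μ :=
  ((ContinuousLinearMap.lsmul ℝ ℝ (E := Y)).flip.compLpL₂ 1 μ).flip
    (indicatorConstLp 1 hA (measure_ne_top μ A) 1)

theorem coeFn_indicatorConstL1 (hA : MeasurableSet A) (y : Y) :
    indicatorConstL1 Y μ hA y =ᵐ[μ] A.indicator fun _ => y := by
  refine (ContinuousLinearMap.coeFn_compLpL _ _).trans ?_
  filter_upwards [indicatorConstLp_coeFn (p := 1) (hs := hA) (hμs := measure_ne_top μ A)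
    (c := (1 : ℝ))] with ω hω
  by_cases hωA : ω ∈ A <;> simp [hω, hωA]

theorem indicatorConstL1_apply (hA : MeasurableSet A) (y : Y) :
    indicatorConstL1 Y μ hA y = indicatorConstLp 1 hA (measure_ne_top μ A) y :=
  Lp.ext ((coeFn_indicatorConstL1 hA y).trans indicatorConstLp_coeFn.symm)

theorem norm_indicatorConstL1_apply (hA : MeasurableSet A) (y : Y) :
    ‖indicatorConstL1 Y μ hA y‖ = ‖y‖ * μ.real A := by
  rw [indicatorConstL1_apply, norm_indicatorConstLp one_ne_zero ENNReal.one_ne_top]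
  simp

theorem IsBoundedWeakStarMeasurable.integralCLM_indicatorConstL1 [SecondCountableTopology Y]
    {g : Ω → StrongDual ℝ Y} {C : ℝ} (hg : IsBoundedWeakStarMeasurable g C)
    (hA : MeasurableSet A) (y : Y) :
    hg.integralCLM μ (indicatorConstL1 Y μ hA y) = ∫ ω in A, g ω y ∂μ := by
  rw [hg.integralCLM_apply, ← integral_indicator hA]
  refine integral_congr_ae ?_
  filter_upwards [coeFn_indicatorConstL1 (μ := μ) hA y] with ω hω
  by_cases hωA : ω ∈ A <;> simp [hω, hωA]

theorem strongDual_L1_ext {ι : Type*} {d : ι → Y} (hd : DenseRange d)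
    {φ ψ : StrongDual ℝ (Lp Y 1 μ)} (h : ∀ (A : Set Ω) (hA : MeasurableSet A) (i : ι),
      φ (indicatorConstL1 Y μ hA (d i)) = ψ (indicatorConstL1 Y μ hA (d i))) : φ = ψ := by
  ext f
  induction f using Lp.induction (p := 1) ENNReal.one_ne_top with
  | indicatorConst y hA hμA =>
    rw [Lp.simpleFunc.coe_indicatorConst, ← indicatorConstL1_apply hA y]
    exact congrFun (hd.equalizer (φ ∘L indicatorConstL1 Y μ hA).continuous
      (ψ ∘L indicatorConstL1 Y μ hA).continuous (funext (h _ hA))) y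
  | add hf hg _ h₁ h₂ => rw [map_add, map_add, h₁, h₂]
  | isClosed => exact isClosed_eq φ.continuous ψ.continuous

/-- `h` is the scalar density `ω ↦ ⟨g ω, y⟩` of the functional `φ`, viewed as the integral against
a family `g` of functionals on `Y`. -/
structure IsL1Density (φ : StrongDual ℝ (Lp Y 1 μ)) (y : Y) (h : Ω → ℝ) : Prop where
  measurable : Measurable h
  integrable : Integrable h μ
  setIntegral_eq : ∀ (A : Set Ω) (hA : MeasurableSet A),
    ∫ ω in A, h ω ∂μ = φ (indicatorConstL1 Y μ hA y)

/-- Multiplying `y` by square integrable scalars turns `φ` into a functional on `L²(μ)`, whose Riesz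
representative is the density. -/
theorem exists_isL1Density (φ : StrongDual ℝ (Lp Y 1 μ)) (y : Y) : ∃ h, IsL1Density φ y h := by
  let T : StrongDual ℝ (Lp ℝ 2 μ) :=
    φ ∘L ((ContinuousLinearMap.lsmul ℝ ℝ (E := Y)).holderL μ 2 2 1).flip (Lp.const 2 μ y)
  let h : Lp ℝ 2 μ := (InnerProductSpace.toDual ℝ _).symm T
  refine ⟨h, (Lp.stronglyMeasurable h).measurable, (Lp.memLp h).integrable one_le_two,
    fun A hA => ?_⟩
  have hμA := measure_ne_top μ A
  calc ∫ ω in A, h ω ∂μ = inner ℝ h (indicatorConstLp 2 hA hμA (1 : ℝ)) := by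
        rw [real_inner_comm, L2.inner_indicatorConstLp_one]
    _ = T (indicatorConstLp 2 hA hμA (1 : ℝ)) := InnerProductSpace.toDual_symm_apply
    _ = φ (indicatorConstL1 Y μ hA y) := by
        refine congrArg φ (Lp.ext ((ContinuousLinearMap.coeFn_holder _ _ _).trans ?_))
        filter_upwards [indicatorConstLp_coeFn (p := 2) (hs := hA) (hμs := hμA) (c := (1 : ℝ)),
          coeFn_indicatorConstL1 hA y, Lp.coeFn_const 2 μ y] with ω h₁ h₂ h₃
        rw [h₁, h₂, h₃]
        by_cases hω : ω ∈ A <;> simp [hω]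

namespace IsL1Density

variable {φ : StrongDual ℝ (Lp Y 1 μ)}

theorem sum_smul {ι : Type*} [Fintype ι] {y : ι → Y} {h : ι → Ω → ℝ}
    (hh : ∀ i, IsL1Density φ (y i) (h i)) (t : ι → ℝ) :
    IsL1Density φ (∑ i, t i • y i) fun ω => ∑ i, t i * h i ω where
  measurable := Finset.measurable_sum _ fun i _ => (hh i).measurable.const_mul _
  integrable := integrable_finsetSum _ fun i _ => (hh i).integrable.const_mul _
  setIntegral_eq A hA := by
    rw [integral_finsetSum _ fun i _ => ((hh i).integrable.const_mul _).integrableOn, map_sum,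
      map_sum]
    refine Finset.sum_congr rfl fun i _ => ?_
    rw [integral_const_mul, (hh i).setIntegral_eq A hA, map_smul, map_smul, smul_eq_mul]

theorem ae_abs_le {y : Y} {h : Ω → ℝ} (hh : IsL1Density φ y h) :
    ∀ᵐ ω ∂μ, |h ω| ≤ ‖φ‖ * ‖y‖ := by
  have hset : ∀ A, MeasurableSet A → |∫ ω in A, h ω ∂μ| ≤ ∫ _ in A, ‖φ‖ * ‖y‖ ∂μ := fun A hA => by
    calc |∫ ω in A, h ω ∂μ| = ‖φ (indicatorConstL1 Y μ hA y)‖ := by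
          rw [hh.setIntegral_eq A hA, Real.norm_eq_abs]
      _ ≤ ‖φ‖ * (‖y‖ * μ.real A) := (φ.le_opNorm _).trans_eq (by rw [norm_indicatorConstL1_apply])
      _ = ∫ _ in A, ‖φ‖ * ‖y‖ ∂μ := by rw [setIntegral_const, smul_eq_mul]; ring
  have hlower := ae_le_of_forall_setIntegral_le (integrable_const (-(‖φ‖ * ‖y‖))) hh.integrable
    fun A hA _ => by
      rw [integral_neg]
      exact (abs_le.1 (hset A hA)).1
  have hupper := ae_le_of_forall_setIntegral_le hh.integrable (integrable_const (‖φ‖ * ‖y‖))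
    fun A hA _ => (abs_le.1 (hset A hA)).2
  filter_upwards [hlower, hupper] with ω h₁ h₂ using abs_le.2 ⟨h₁, h₂⟩

end IsL1Density

end IndicatorConst

theorem exists_strongDual_apply_eq {ι : Type*} {d : ι → Y} {a : ι → ℝ} {C : ℝ} (hC : 0 ≤ C)
    (h : ∀ r : ι →₀ ℝ, |Finsupp.linearCombination ℝ a r| ≤ C * ‖Finsupp.linearCombination ℝ d r‖) :
    ∃ g : StrongDual ℝ Y, ‖g‖ ≤ C ∧ ∀ i, g (d i) = a i := by
  let L := Finsupp.linearCombination ℝ d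
  let ψ := Finsupp.linearCombination ℝ a
  have hker : ψ ∈ LinearMap.range L.dualMap := by
    rw [LinearMap.range_dualMap_eq_dualAnnihilator_ker, Submodule.mem_dualAnnihilator]
    intro r (hr : L r = 0)
    simpa [L, hr] using h r
  obtain ⟨ψ', hψ'⟩ := hker
  have hψL : ∀ r, ψ' (L r) = ψ r := LinearMap.congr_fun hψ'
  let η : StrongDual ℝ (LinearMap.range L) :=
    (ψ'.domRestrict (LinearMap.range L)).mkContinuous C (by
      rintro ⟨_, r, rfl⟩
      simpa [hψL] using h r)
  obtain ⟨g, hg, hgn⟩ := exists_extension_norm_eq (LinearMap.range L) η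
  refine ⟨g, hgn.trans_le (LinearMap.mkContinuous_norm_le _ hC _), fun i => ?_⟩
  have hLi : L (Finsupp.single i 1) = d i := by simp [L]
  calc g (d i) = ψ' (d i) := hg ⟨d i, _, hLi⟩
    _ = a i := by rw [← hLi, hψL]; simp [ψ]

theorem abs_linearCombination_le_of_forall_rat {ι : Type*} {d : ι → Y} {a : ι → ℝ} {C : ℝ}
    (h : ∀ (s : Finset ι) (q : s → ℚ), |∑ i, (q i : ℝ) * a i| ≤ C * ‖∑ i, (q i : ℝ) • d i‖)
    (r : ι →₀ ℝ) : |Finsupp.linearCombination ℝ a r| ≤ C * ‖Finsupp.linearCombination ℝ d r‖ := by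
  have hreal : ∀ t : r.support → ℝ, |∑ i, t i * a i| ≤ C * ‖∑ i, t i • d i‖ := fun t =>
    (DenseRange.piMap fun _ => Rat.denseRange_cast).induction_on
      (p := fun t : r.support → ℝ => |∑ i, t i * a i| ≤ C * ‖∑ i, t i • d i‖) t
      (isClosed_le (by fun_prop) (by fun_prop)) fun q => h _ q
  have hr := hreal fun i => r i
  rw [Finset.sum_coe_sort r.support fun i => r i * a i,
    Finset.sum_coe_sort r.support fun i => r i • d i] at hr
  simpa only [Finsupp.linearCombination_apply, Finsupp.sum, smul_eq_mul] using hr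

theorem measurable_apply_of_denseRange {ι : Type*} {d : ι → Y} (hd : DenseRange d)
    {g : Ω → StrongDual ℝ Y} (hg : ∀ i, Measurable fun ω => g ω (d i)) (y : Y) :
    Measurable fun ω => g ω y := by
  obtain ⟨u, hu, huy⟩ := mem_closure_iff_seq_limit.1 (hd y)
  refine measurable_of_tendsto_metrizable (f := fun n ω => g ω (u n)) (fun n => ?_)
    (tendsto_pi_nhds.2 fun ω => ((g ω).continuous.tendsto y).comp huy)
  obtain ⟨i, hi⟩ := hu n
  exact hi ▸ hg i

theorem exists_isBoundedWeakStarMeasurable_integralCLM_eq [IsFiniteMeasure μ]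
    [SecondCountableTopology Y] (φ : StrongDual ℝ (Lp Y 1 μ)) :
    ∃ (g : Ω → StrongDual ℝ Y) (hg : IsBoundedWeakStarMeasurable g ‖φ‖),
      hg.integralCLM μ = φ := by
  let d := TopologicalSpace.denseSeq Y
  have hd : DenseRange d := TopologicalSpace.denseRange_denseSeq Y
  choose h hh using fun k => exists_isL1Density φ (d k)
  have hae : ∀ᵐ ω ∂μ, ∀ (s : Finset ℕ) (q : s → ℚ),
      |∑ i, (q i : ℝ) * h i ω| ≤ ‖φ‖ * ‖∑ i, (q i : ℝ) • d i‖ :=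
    ae_all_iff.2 fun s => ae_all_iff.2 fun q =>
      (IsL1Density.sum_smul (fun i : s => hh i) fun i => q i).ae_abs_le
  obtain ⟨G, hG, hGm, hle⟩ := hae.exists_measurable_mem
  have hHelly : ∀ ω, ∃ u : StrongDual ℝ Y, ‖u‖ ≤ ‖φ‖ ∧ ∀ k, u (d k) = G.indicator (h k) ω := by
    intro ω
    refine exists_strongDual_apply_eq (norm_nonneg φ)
      (abs_linearCombination_le_of_forall_rat fun s q => ?_)
    by_cases hω : ω ∈ G
    · simpa only [indicator_of_mem hω] using hle ω hω s q
    · simpa only [indicator_of_notMem hω, mul_zero, Finset.sum_const_zero, abs_zero] using by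
        positivity
  choose g hgφ hgd using hHelly
  have hg : IsBoundedWeakStarMeasurable g ‖φ‖ :=
    ⟨measurable_apply_of_denseRange hd fun k => by
      simpa only [hgd] using (hh k).measurable.indicator hGm, hgφ⟩
  refine ⟨g, hg, strongDual_L1_ext hd fun A hA k => ?_⟩
  rw [hg.integralCLM_indicatorConstL1 hA, ← (hh k).setIntegral_eq A hA]
  refine integral_congr_ae (ae_restrict_of_ae ?_)
  filter_upwards [hG] with ω hω
  rw [hgd, indicator_of_mem hω]

end Representation

section Separating

theorem measurable_of_separating {α β : Type*} [MeasurableSpace α] [TopologicalSpace β]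
    [PolishSpace β] [MeasurableSpace β] [BorelSpace β] {ι : Type*} [Countable ι] {F : ι → β → ℝ}
    (hF : ∀ i, Continuous (F i)) (hsep : Pairwise fun x y => ∃ i, F i x ≠ F i y) {f : α → β}
    (hf : ∀ i, Measurable fun a => F i (f a)) : Measurable f := by
  have hinj : Function.Injective fun b i => F i b := fun x y hxy => by
    by_contra hne
    obtain ⟨i, hi⟩ := hsep hne
    exact hi (congrFun hxy i)
  exact ((continuous_pi hF).measurableEmbedding hinj).measurable_comp_iff.1
    (measurable_pi_lambda _ hf)

theorem measurable_of_measurable_eval {α K : Type*} [MeasurableSpace α] [TopologicalSpace K]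
    [CompactSpace K] [T2Space K] [SecondCountableTopology K] [MeasurableSpace C(K, ℝ)]
    [BorelSpace C(K, ℝ)] {f : α → C(K, ℝ)} (hf : ∀ k, Measurable fun a => f a k) :
    Measurable f := by
  obtain ⟨D, hD, hdense⟩ := TopologicalSpace.exists_countable_dense K
  have := hD.to_subtype
  refine measurable_of_separating (F := fun (k : D) (h : C(K, ℝ)) => h k)
    (fun k => ContinuousEvalConst.continuous_eval_const _) (fun h₁ h₂ hne => ?_) fun k => hf k
  by_contra! heq
  exact hne (ContinuousMap.coe_injective
    (h₁.continuous.ext_on hdense h₂.continuous fun k hk => heq ⟨k, hk⟩))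

variable (Y : Type*) [NormedAddCommGroup Y] [NormedSpace ℝ Y] [SecondCountableTopology Y]

theorem exists_seq_strongDual_separating :
    ∃ u : ℕ → StrongDual ℝ Y, Pairwise fun x y => ∃ n, u n x ≠ u n y := by
  obtain ⟨T, hT, hcover⟩ := TopologicalSpace.isOpen_iUnion_countable
    (fun u : StrongDual ℝ Y => {x | u x ≠ 0}) fun u => isOpen_ne_fun u.continuous continuous_const
  obtain ⟨u, hu⟩ := (hT.insert 0).exists_eq_range (insert_nonempty 0 T)
  refine ⟨u, fun x y hxy => ?_⟩
  obtain ⟨v, hv⟩ := SeparatingDual.exists_ne_zero (R := ℝ) (sub_ne_zero.2 hxy)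
  have hmem : x - y ∈ ⋃ u ∈ T, {x | u x ≠ 0} := hcover ▸ mem_iUnion.2 ⟨v, hv⟩
  obtain ⟨w, hwT, hw⟩ := mem_iUnion₂.1 hmem
  obtain ⟨n, rfl⟩ : w ∈ range u := hu ▸ mem_insert_of_mem 0 hwT
  exact ⟨n, fun h => hw (by rw [map_sub, h, sub_self])⟩

variable {Y}

theorem measurable_of_measurable_strongDual_apply {α : Type*} [MeasurableSpace α]
    [CompleteSpace Y] [MeasurableSpace Y] [BorelSpace Y] {f : α → Y}
    (hf : ∀ u : StrongDual ℝ Y, Measurable fun a => u (f a)) : Measurable f := by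
  obtain ⟨u, hu⟩ := exists_seq_strongDual_separating Y
  exact measurable_of_separating (fun n => (u n).continuous) hu fun n => hf (u n)

end Separating

section Barycenter

variable {Y : Type*} [NormedAddCommGroup Y] [NormedSpace ℝ Y]
  {K : Type*} [TopologicalSpace K]

/-- The restriction of a functional on `Y` to a weakly continuous image of `K` in `Y`. -/
def restrictDual (ι : C(K, WeakSpace ℝ Y)) (u : StrongDual ℝ Y) : C(K, ℝ) :=
  ⟨fun k => u ((toWeakSpace ℝ Y).symm (ι k)),
    (continuous_apply_toWeakSpace_symm u).comp ι.continuous⟩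

/-- `y` is the barycenter of `Λ`, a signed measure on `K` by the Riesz representation, transported
to `Y` by `ι`. -/
def IsBarycenter [CompactSpace K] (ι : C(K, WeakSpace ℝ Y)) (Λ : StrongDual ℝ C(K, ℝ)) (y : Y) :
    Prop :=
  ∀ u : StrongDual ℝ Y, u y = Λ (restrictDual ι u)

variable [CompactSpace K]

theorem isBarycenter_evalCLM (ι : C(K, WeakSpace ℝ Y)) (k : K) :
    IsBarycenter ι (ContinuousMap.evalCLM ℝ k) ((toWeakSpace ℝ Y).symm (ι k)) := fun _ => rfl

theorem exists_norm_toWeakSpace_symm_le (ι : C(K, WeakSpace ℝ Y)) :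
    ∃ R, 0 ≤ R ∧ ∀ k, ‖(toWeakSpace ℝ Y).symm (ι k)‖ ≤ R := by
  have hrange : IsWeaklyCompact (range fun k => (toWeakSpace ℝ Y).symm (ι k)) := by
    rw [IsWeaklyCompact, ← range_comp]
    exact isCompact_range ι.continuous
  obtain ⟨R, hR, hle⟩ := hrange.isBounded.exists_pos_norm_le
  exact ⟨R, hR.le, fun k => hle _ (mem_range_self k)⟩

theorem norm_restrictDual_le {ι : C(K, WeakSpace ℝ Y)} {R : ℝ} (hR : 0 ≤ R)
    (hι : ∀ k, ‖(toWeakSpace ℝ Y).symm (ι k)‖ ≤ R) (u : StrongDual ℝ Y) :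
    ‖restrictDual ι u‖ ≤ ‖u‖ * R :=
  (ContinuousMap.norm_le _ (by positivity)).2 fun k => u.le_opNorm_of_le (hι k)

theorem IsBarycenter.norm_le {ι : C(K, WeakSpace ℝ Y)} {R : ℝ} (hR : 0 ≤ R)
    (hι : ∀ k, ‖(toWeakSpace ℝ Y).symm (ι k)‖ ≤ R) {Λ : StrongDual ℝ C(K, ℝ)} {y : Y}
    (hy : IsBarycenter ι Λ y) : ‖y‖ ≤ ‖Λ‖ * R :=
  NormedSpace.norm_le_dual_bound ℝ y (by positivity) fun u => by
    rw [hy u, mul_assoc, mul_comm R]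
    exact Λ.le_opNorm_of_le (norm_restrictDual_le hR hι u)

theorem exists_isFiniteMeasure_integral_eq [T2Space K] [MeasurableSpace K] [BorelSpace K]
    (Λ : StrongDual ℝ C(K, ℝ)) (hΛ : ∀ h, 0 ≤ h → 0 ≤ Λ h) :
    ∃ ν : Measure K, IsFiniteMeasure ν ∧ ∀ h : C(K, ℝ), ∫ k, h k ∂ν = Λ h := by
  let Λc : CompactlySupportedContinuousMap K ℝ →ₚ[ℝ] ℝ := PositiveLinearMap.mk₀
    { toFun := fun h => Λ h.toContinuousMap
      map_add' := fun h₁ h₂ => map_add Λ h₁.toContinuousMap h₂.toContinuousMap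
      map_smul' := fun c h => map_smul Λ c h.toContinuousMap } fun h hh => hΛ _ hh
  exact ⟨RealRMK.rieszMeasure Λc, inferInstance, fun h =>
    RealRMK.integral_rieszMeasure Λc (CompactlySupportedContinuousMap.continuousMapEquiv h)⟩

theorem exists_isBarycenter [T2Space K] [CompleteSpace Y] [SecondCountableTopology Y]
    (ι : C(K, WeakSpace ℝ Y)) {Λ : StrongDual ℝ C(K, ℝ)} (hΛ : ∀ h, 0 ≤ h → 0 ≤ Λ h) :
    ∃ y, IsBarycenter ι Λ y := by
  borelize K Y
  obtain ⟨ν, _, hν⟩ := exists_isFiniteMeasure_integral_eq Λ hΛ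
  obtain ⟨R, -, hR⟩ := exists_norm_toWeakSpace_symm_le ι
  have hmeas : Measurable fun k => (toWeakSpace ℝ Y).symm (ι k) :=
    measurable_of_measurable_strongDual_apply fun u => (restrictDual ι u).continuous.measurable
  have hint : Integrable (fun k => (toWeakSpace ℝ Y).symm (ι k)) ν :=
    Integrable.of_bound hmeas.aestronglyMeasurable R (ae_of_all _ hR)
  exact ⟨_, fun u => (u.integral_comp_comm hint).symm.trans (hν (restrictDual ι u))⟩

end Barycenter

section YoungMeasures

variable {Y : Type*} [NormedAddCommGroup Y] [NormedSpace ℝ Y]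
  {K : Type*} [TopologicalSpace K] [CompactSpace K] {μ : Measure Ω}

variable (K μ) in
/-- Contractive positive functionals on `L¹(μ, C(K))`, in the weak-* topology. They are the
integrals against the measurable families of positive measures of mass at most one on `K` (Young
measures). -/
def youngFunctionals : Set (WeakDual ℝ (Lp C(K, ℝ) 1 μ)) :=
  WeakDual.toStrongDual ⁻¹' Metric.closedBall 0 1 ∩ {Λ | ∀ H, (∀ᵐ ω ∂μ, 0 ≤ H ω) → 0 ≤ Λ H}

theorem isCompact_youngFunctionals : IsCompact (youngFunctionals K μ) := by
  refine (WeakDual.isCompact_closedBall 0 1).inter_right ?_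
  simp only [ofPred_forall]
  exact isClosed_iInter fun H => isClosed_iInter fun _ =>
    isClosed_le continuous_const (WeakDual.eval_continuous H)

theorem isBoundedWeakStarMeasurable_evalCLM [MeasurableSpace K] [OpensMeasurableSpace K]
    {k : Ω → K} (hk : Measurable k) :
    IsBoundedWeakStarMeasurable (Y := C(K, ℝ)) (fun ω => ContinuousMap.evalCLM ℝ (k ω)) 1 where
  measurable_apply_const h := h.continuous.measurable.comp hk
  norm_le ω := ContinuousLinearMap.opNorm_le_bound _ zero_le_one fun h => by
    simpa using h.norm_coe_le_norm (k ω)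

variable [T2Space K]

theorem exists_Lp_ae_isBarycenter [SecondCountableTopology Y] [IsFiniteMeasure μ] [CompleteSpace Y]
    (ι : C(K, WeakSpace ℝ Y)) {ν : Ω → StrongDual ℝ C(K, ℝ)} {C : ℝ}
    (hν : IsBoundedWeakStarMeasurable ν C) (hpos : ∀ ω h, 0 ≤ h → 0 ≤ ν ω h) :
    ∃ f : Lp Y 1 μ, ∀ᵐ ω ∂μ, IsBarycenter ι (ν ω) (f ω) := by
  borelize Y
  choose f hf using fun ω => exists_isBarycenter ι (hpos ω)
  obtain ⟨R, hR₀, hR⟩ := exists_norm_toWeakSpace_symm_le ι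
  have hmeas : Measurable f := measurable_of_measurable_strongDual_apply fun u => by
    simpa only [hf _ u] using hν.measurable_apply_const (restrictDual ι u)
  have hLp : MemLp f 1 μ := .of_bound hmeas.aestronglyMeasurable (C * R) (ae_of_all _ fun ω =>
    ((hf ω).norm_le hR₀ hR).trans (mul_le_mul_of_nonneg_right (hν.norm_le ω) hR₀))
  refine ⟨hLp.toLp, ?_⟩
  filter_upwards [hLp.coeFn_toLp] with ω hω
  exact hω ▸ hf ω

variable [SecondCountableTopology K]

theorem integralCLM_evalCLM_mem_youngFunctionals [MeasurableSpace K] [OpensMeasurableSpace K]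
    {k : Ω → K} (hk : Measurable k) :
    StrongDual.toWeakDual ((isBoundedWeakStarMeasurable_evalCLM hk).integralCLM μ) ∈
      youngFunctionals K μ := by
  refine ⟨?_, fun H hH => integral_nonneg_of_ae ?_⟩
  · exact (mem_closedBall_zero_iff (E := StrongDual ℝ (Lp C(K, ℝ) 1 μ))).2 <|
      (isBoundedWeakStarMeasurable_evalCLM hk).norm_integralCLM_le zero_le_one
  · filter_upwards [hH] with ω hω using hω (k ω)

variable [IsFiniteMeasure μ]

theorem IsBoundedWeakStarMeasurable.ae_forall_nonneg {ν : Ω → StrongDual ℝ C(K, ℝ)} {C : ℝ}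
    (hν : IsBoundedWeakStarMeasurable ν C)
    (hpos : ∀ H, (∀ᵐ ω ∂μ, 0 ≤ H ω) → 0 ≤ hν.integralCLM μ H) :
    ∀ᵐ ω ∂μ, ∀ h, 0 ≤ h → 0 ≤ ν ω h := by
  obtain ⟨D, hDc, hD⟩ := TopologicalSpace.exists_countable_dense {h : C(K, ℝ) | 0 ≤ h}
  have hDpos : ∀ h ∈ D, ∀ᵐ ω ∂μ, 0 ≤ ν ω h := fun h _ => by
    refine ae_nonneg_of_forall_setIntegral_nonneg
      (.of_bound (hν.measurable_apply_const h).aestronglyMeasurable (C * ‖(h : C(K, ℝ))‖)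
        (ae_of_all _ (hν.norm_apply_le fun _ => (h : C(K, ℝ))))) fun A hA _ => ?_
    rw [← hν.integralCLM_indicatorConstL1 hA]
    refine hpos _ ?_
    filter_upwards [coeFn_indicatorConstL1 (μ := μ) hA (h : C(K, ℝ))] with ω hω
    exact hω ▸ indicator_apply_nonneg fun _ => h.2
  filter_upwards [(ae_ball_iff hDc).2 hDpos] with ω hω h hh
  have hclosed : IsClosed {h : {h : C(K, ℝ) | 0 ≤ h} | 0 ≤ ν ω h} :=
    isClosed_le continuous_const ((ν ω).continuous.comp continuous_subtype_val)
  exact hclosed.closure_subset_iff.2 hω (hD ⟨h, hh⟩)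

theorem exists_nonneg_integralCLM_eq {Λ : WeakDual ℝ (Lp C(K, ℝ) 1 μ)}
    (hΛ : Λ ∈ youngFunctionals K μ) :
    ∃ (ν : Ω → StrongDual ℝ C(K, ℝ)) (C : ℝ) (hν : IsBoundedWeakStarMeasurable ν C),
      (∀ ω h, 0 ≤ h → 0 ≤ ν ω h) ∧ hν.integralCLM μ = WeakDual.toStrongDual Λ := by
  obtain ⟨ν, hν, hνΛ⟩ :=
    exists_isBoundedWeakStarMeasurable_integralCLM_eq (WeakDual.toStrongDual Λ)
  obtain ⟨G, hG, hGm, hpos⟩ :=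
    (hν.ae_forall_nonneg fun H hH => (hΛ.2 H hH).trans_eq
      (DFunLike.congr_fun hνΛ H).symm).exists_measurable_mem
  refine ⟨G.indicator ν, _, hν.indicator hGm, fun ω h hh => ?_, ?_⟩
  · by_cases hω : ω ∈ G
    · simpa only [indicator_of_mem hω] using hpos ω hω h hh
    · simp [indicator_of_notMem hω]
  · refine Eq.trans (ContinuousLinearMap.ext fun H => ?_) hνΛ
    refine integral_congr_ae ?_
    filter_upwards [hG] with ω hω
    rw [indicator_of_mem hω]

theorem IsBoundedWeakStarMeasurable.exists_Lp_coeFn_eq_restrictDual (ι : C(K, WeakSpace ℝ Y))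
    {g : Ω → StrongDual ℝ Y} {C : ℝ} (hg : IsBoundedWeakStarMeasurable g C) :
    ∃ H : Lp C(K, ℝ) 1 μ, H =ᵐ[μ] fun ω => restrictDual ι (g ω) := by
  borelize C(K, ℝ)
  obtain ⟨R, hR₀, hR⟩ := exists_norm_toWeakSpace_symm_le ι
  have hmeas : Measurable fun ω => restrictDual ι (g ω) :=
    measurable_of_measurable_eval fun k => hg.measurable_apply_const _
  have hLp : MemLp (fun ω => restrictDual ι (g ω)) 1 μ :=
    .of_bound hmeas.aestronglyMeasurable (C * R) (ae_of_all _ fun ω =>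
      (norm_restrictDual_le hR₀ hR _).trans (mul_le_mul_of_nonneg_right (hg.norm_le ω) hR₀))
  exact ⟨hLp.toLp, hLp.coeFn_toLp⟩

variable [SecondCountableTopology Y]

theorem exists_forall_apply_eq_integralCLM (ι : C(K, WeakSpace ℝ Y))
    (φ : StrongDual ℝ (Lp Y 1 μ)) :
    ∃ H : Lp C(K, ℝ) 1 μ, ∀ (ν : Ω → StrongDual ℝ C(K, ℝ)) (C : ℝ)
      (hν : IsBoundedWeakStarMeasurable ν C) (f : Lp Y 1 μ),
      (∀ᵐ ω ∂μ, IsBarycenter ι (ν ω) (f ω)) → φ f = hν.integralCLM μ H := by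
  obtain ⟨g, hg, hgφ⟩ := exists_isBoundedWeakStarMeasurable_integralCLM_eq φ
  obtain ⟨H, hH⟩ := hg.exists_Lp_coeFn_eq_restrictDual (μ := μ) ι
  refine ⟨H, fun ν C hν f hf => ?_⟩
  rw [← hgφ]
  refine integral_congr_ae ?_
  filter_upwards [hH, hf] with ω hHω hfω
  rw [hHω, hfω (g ω)]

/-- Taking barycenters maps the Young measures onto a weakly compact set, which contains the
functions with values in `K` as images of the families of Dirac measures. -/
theorem isRelWeaklyCompact_setOf_ae_eq_comp [CompleteSpace Y] [MeasurableSpace K]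
    [OpensMeasurableSpace K] (ι : C(K, WeakSpace ℝ Y)) :
    IsRelWeaklyCompact {f : Lp Y 1 μ | ∃ k : Ω → K, Measurable k ∧
      ∀ᵐ ω ∂μ, f ω = (toWeakSpace ℝ Y).symm (ι (k ω))} := by
  choose lift hlift using exists_forall_apply_eq_integralCLM (μ := μ) ι
  have hbary : ∀ Λ : youngFunctionals K μ, ∃ f : Lp Y 1 μ, ∀ φ, φ f = Λ.1 (lift φ) := by
    rintro ⟨Λ, hΛ⟩
    obtain ⟨ν, C, hν, hpos, hνΛ⟩ := exists_nonneg_integralCLM_eq hΛ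
    obtain ⟨f, hf⟩ := exists_Lp_ae_isBarycenter (μ := μ) ι hν hpos
    exact ⟨f, fun φ => (hlift φ ν C hν f hf).trans (DFunLike.congr_fun hνΛ _)⟩
  choose bary hbary using hbary
  have hcont : Continuous fun Λ => toWeakSpace ℝ (Lp Y 1 μ) (bary Λ) :=
    WeakBilin.continuous_of_continuous_eval _ fun φ =>
      ((WeakDual.eval_continuous (lift φ)).comp continuous_subtype_val).congr
        fun Λ => (hbary Λ φ).symm
  have := isCompact_iff_compactSpace.1 (isCompact_youngFunctionals (K := K) (μ := μ))
  refine (isCompact_range hcont).closure_of_subset ?_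
  rintro _ ⟨f, ⟨k, hk, hfk⟩, rfl⟩
  have hdirac : ∀ᵐ ω ∂μ, IsBarycenter ι (ContinuousMap.evalCLM ℝ (k ω)) (f ω) := by
    filter_upwards [hfk] with ω hω
    exact hω ▸ isBarycenter_evalCLM ι (k ω)
  refine ⟨⟨_, integralCLM_evalCLM_mem_youngFunctionals hk⟩, congrArg _ ?_⟩
  exact (SeparatingDual.eq_iff_forall_dual_eq (R := ℝ)).2 fun φ => (hbary _ φ).trans
    (hlift φ _ 1 (isBoundedWeakStarMeasurable_evalCLM hk) f hdirac).symm

end YoungMeasures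

section Separable

variable {Y : Type*} [NormedAddCommGroup Y] [NormedSpace ℝ Y]

theorem metrizableSpace_of_isCompact_weakSpace [SecondCountableTopology Y]
    {K : Set (WeakSpace ℝ Y)} (hK : IsCompact K) :
    TopologicalSpace.MetrizableSpace K := by
  have := isCompact_iff_compactSpace.1 hK
  obtain ⟨u, hu⟩ := exists_seq_strongDual_separating Y
  exact Metric.PiNatEmbed.TopologicalSpace.MetrizableSpace.of_countable_separating
    (fun n (k : K) => u n ((toWeakSpace ℝ Y).symm k))
    (fun n => (continuous_apply_toWeakSpace_symm (u n)).comp continuous_subtype_val)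
    fun k₁ k₂ hne => hu ((toWeakSpace ℝ Y).symm.injective.ne (Subtype.coe_injective.ne hne))

theorem exists_measurable_ae_eq_toWeakSpace_symm {μ : Measure Ω} {W : Set Y}
    [MeasurableSpace (toWeakSpace ℝ Y '' W)] [BorelSpace (toWeakSpace ℝ Y '' W)]
    (hW : W.Nonempty) {f : Ω → Y} (hf : AEStronglyMeasurable f μ) (hfW : ∀ᵐ ω ∂μ, f ω ∈ W) :
    ∃ k : Ω → toWeakSpace ℝ Y '' W, Measurable k ∧
      ∀ᵐ ω ∂μ, f ω = (toWeakSpace ℝ Y).symm (k ω) := by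
  borelize Y
  obtain ⟨g, hg, hgW, hfg⟩ := hf.aemeasurable.exists_ae_eq_range_subset hfW hW
  have htoWeak : Continuous fun y : W => (⟨toWeakSpace ℝ Y y, mem_image_of_mem _ y.2⟩ :
      toWeakSpace ℝ Y '' W) :=
    ((toWeakSpaceCLM ℝ Y).continuous.comp continuous_subtype_val).subtype_mk _
  refine ⟨_, htoWeak.measurable.comp (hg.subtype_mk (h := fun ω => hgW (mem_range_self ω))), ?_⟩
  filter_upwards [hfg] with ω hω
  exact hω.trans ((toWeakSpace ℝ Y).symm_apply_apply _).symm

end Separable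

section SeparableRange

theorem exists_isClosed_isSeparable_submodule_forall_mem {f : ℕ → Ω → X}
    (hf : ∀ n, StronglyMeasurable (f n)) :
    ∃ Y : Submodule ℝ X, IsClosed (Y : Set X) ∧ TopologicalSpace.IsSeparable (Y : Set X) ∧
      ∀ n ω, f n ω ∈ Y := by
  have hS : TopologicalSpace.IsSeparable (⋃ n, range (f n)) :=
    .iUnion fun n => (hf n).isSeparable_range
  refine ⟨(Submodule.span ℝ (⋃ n, range (f n))).topologicalClosure,
    Submodule.isClosed_topologicalClosure _, ?_, fun n ω => Submodule.le_topologicalClosure _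
      (Submodule.subset_span (mem_iUnion.2 ⟨n, mem_range_self ω⟩))⟩
  rw [Submodule.topologicalClosure_coe]
  exact hS.span.closure

theorem exists_compLpL_subtypeL_eq {μ : Measure Ω} {Y : Submodule ℝ X} (f : Lp X 1 μ)
    (hf : ∀ ω, f ω ∈ Y) : ∃ h : Lp Y 1 μ, Y.subtypeL.compLpL 1 μ h = f := by
  let h : Ω → Y := fun ω => ⟨f ω, hf ω⟩
  have hmeas : AEStronglyMeasurable h μ :=
    Topology.IsEmbedding.subtypeVal.aestronglyMeasurable_comp_iff.1 (Lp.aestronglyMeasurable f)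
  have hLp : MemLp h 1 μ := (Lp.memLp f).of_le hmeas (ae_of_all _ fun _ => le_rfl)
  refine ⟨hLp.toLp, Lp.ext ?_⟩
  filter_upwards [Y.subtypeL.coeFn_compLpL (p := 1) (μ := μ) hLp.toLp, hLp.coeFn_toLp] with ω h₁ h₂
  rw [h₁, h₂, Submodule.subtypeL_apply]

end SeparableRange

section Main

variable {μ : Measure Ω} [IsFiniteMeasure μ]

theorem IsWeaklyCompact.isRelWeaklyCompact_setOf_ae_mem_of_separable [CompleteSpace X]
    [SecondCountableTopology X] {W : Set X} (hW : IsWeaklyCompact W) :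
    IsRelWeaklyCompact {f : Lp X 1 μ | ∀ᵐ ω ∂μ, f ω ∈ W} := by
  have hK : IsCompact (toWeakSpace ℝ X '' insert 0 W) := by
    rw [image_insert_eq]
    exact IsCompact.insert hW _
  have := isCompact_iff_compactSpace.1 hK
  have := metrizableSpace_of_isCompact_weakSpace hK
  borelize ↥(toWeakSpace ℝ X '' insert 0 W)
  refine (isRelWeaklyCompact_setOf_ae_eq_comp (μ := μ)
    ⟨((↑) : toWeakSpace ℝ X '' insert 0 W → _), continuous_subtype_val⟩).mono
    fun f (hf : ∀ᵐ ω ∂μ, f ω ∈ W) => ?_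
  exact exists_measurable_ae_eq_toWeakSpace_symm (insert_nonempty 0 W)
    (Lp.aestronglyMeasurable f) (hf.mono fun ω hω => mem_insert_of_mem 0 hω)

theorem IsWeaklyCompact.isRelWeaklyCompact_setOf_ae_mem [CompleteSpace X] {W : Set X}
    (hW : IsWeaklyCompact W) : IsRelWeaklyCompact {f : Lp X 1 μ | ∀ᵐ ω ∂μ, f ω ∈ W} := by
  refine isRelWeaklyCompact_of_forall_seq fun z hz => ?_
  obtain ⟨Y, hYc, hYs, hzY⟩ := exists_isClosed_isSeparable_submodule_forall_mem
    fun n => Lp.stronglyMeasurable (z n)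
  have := hYs.separableSpace
  have := hYc.completeSpace_coe
  have := UniformSpace.secondCountable_of_separable Y
  refine ((hW.preimage_subtype hYc).isRelWeaklyCompact_setOf_ae_mem_of_separable.image
    (Y.subtypeL.compLpL 1 μ)).mono (range_subset_iff.2 fun n => ?_)
  obtain ⟨h, hh⟩ := exists_compLpL_subtypeL_eq (z n) (hzY n)
  refine ⟨h, ?_, hh⟩
  have hzn : ∀ᵐ ω ∂μ, z n ω ∈ W := hz n
  filter_upwards [hzn, Y.subtypeL.coeFn_compLpL (p := 1) (μ := μ) h] with ω hω heq
  rwa [← hh, heq] at hω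

end Main

/-- For a weakly compact `W ⊆ X`, the set `L(W) = {f ∈ L¹(μ,X) : f(ω) ∈ W μ-a.e.}` is a
δS-set; in particular it is relatively weakly compact in `L¹(μ,X)`. -/
theorem isDeltaSSet_LW (μ : Measure Ω) [IsProbabilityMeasure μ] [CompleteSpace X]
    (W : Set X) (hW : IsWeaklyCompact W) :
    IsDeltaSSet μ {f : Lp X 1 μ | ∀ᵐ ω ∂μ, (f : Ω → X) ω ∈ W} ∧
      IsRelWeaklyCompact {f : Lp X 1 μ | ∀ᵐ ω ∂μ, (f : Ω → X) ω ∈ W} :=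
  ⟨hW.isDeltaSSet_setOf_ae_mem, hW.isRelWeaklyCompact_setOf_ae_mem⟩
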